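/- If for every agent, as one goes through a sequence of cost share vectors, the unit price Bᵢ/(1-Tᵢ) that agent i faces is nondecreasing and her release time Tᵢ is nondecreasing, then the sequential unanimous mechanism defined by that sequence is strategy-proof. -/

import Mathlib

open scoped Classical

/-- Utility of agent `i` (with true valuation `trueVal`) under the sequential
unanimous mechanism given by the sequence of cost share vectors `(T j, B j)`,
when the agents report `report`: the mechanism implements the first cost share
vector accepted by all agents (agent `i'` accepts vector `j` iff
`report i' * (1 - T j i') - B j i' ≥ 0`), giving agent `i` release time `T j i`
and payment `B j i`; if no vector is unanimously accepted the project is not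
built and everyone's utility is `0`. -/
noncomputable def seqUtil {n m : ℕ} (T B : Fin m → Fin n → ℝ)
    (report : Fin n → ℝ) (trueVal : ℝ) (i : Fin n) : ℝ :=
  let S := Finset.univ.filter fun j : Fin m =>
    ∀ i' : Fin n, 0 ≤ report i' * (1 - T j i') - B j i'
  if h : S.Nonempty then trueVal * (1 - T (S.min' h) i) - B (S.min' h) i else 0

/-!
An agent of valuation `v` offered release time `t < 1` at price `b` gains
`v * (1 - t) - b = (v - b / (1 - t)) * (1 - t)`. From the first offer she accepts onwards both
factors are nonincreasing, the second stays positive and the first starts nonnegative, so no later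
offer is better for her; nor is one with `t = 1`, whose gain is at most zero. If a misreport leads
to an offer with a negative gain, she regrets it, since truth-telling guarantees a nonnegative
gain. Otherwise that offer is also unanimously accepted under her truthful report, so the truthful
outcome comes no later in the sequence and is at least as good.
-/

section NetUtility

/-- The quasilinear utility of an agent with valuation `v` from release time `t` and payment `b`;
the agent accepts the offer `(t, b)` iff this is nonnegative. -/
def netUtility {K : Type*} [Ring K] (v t b : K) : K := v * (1 - t) - b

variable {K : Type*} [Field K]

theorem netUtility_eq_sub_unitPrice_mul {t : K} (ht : t ≠ 1) (v b : K) :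
    netUtility v t b = (v - b / (1 - t)) * (1 - t) := by
  rw [netUtility, sub_mul, div_mul_cancel₀ b (sub_ne_zero.mpr ht.symm)]

variable [LinearOrder K] [IsStrictOrderedRing K]

theorem netUtility_nonneg_iff_unitPrice_le {v t b : K} (ht : t < 1) :
    0 ≤ netUtility v t b ↔ b / (1 - t) ≤ v := by
  rw [netUtility, sub_nonneg, div_le_iff₀ (sub_pos.mpr ht)]

theorem netUtility_le_of_unitPrice_le {v t t' b b' : K} (htime : t ≤ t') (ht' : t' < 1)
    (hprice : b / (1 - t) ≤ b' / (1 - t')) (haccept : 0 ≤ netUtility v t b) :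
    netUtility v t' b' ≤ netUtility v t b := by
  have ht : t < 1 := htime.trans_lt ht'
  have hmargin : b / (1 - t) ≤ v := (netUtility_nonneg_iff_unitPrice_le ht).mp haccept
  calc netUtility v t' b'
      = (v - b' / (1 - t')) * (1 - t') := netUtility_eq_sub_unitPrice_mul ht'.ne v b'
    _ ≤ (v - b / (1 - t)) * (1 - t) :=
        mul_le_mul (sub_le_sub_left hprice v) (sub_le_sub_left htime 1)
          (sub_nonneg.mpr ht'.le) (sub_nonneg.mpr hmargin)
    _ = netUtility v t b := (netUtility_eq_sub_unitPrice_mul ht.ne v b).symm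

theorem netUtility_le_of_monotoneOn_unitPrice {ι : Type*} [Preorder ι] {t b : ι → K}
    (hle : ∀ j, t j ≤ 1) (hpay : ∀ j, t j = 1 → 0 ≤ b j)
    (hprice : MonotoneOn (fun j => b j / (1 - t j)) {j | t j < 1}) (htime : Monotone t)
    {v : K} {k k' : ι} (hk : k ≤ k') (haccept : 0 ≤ netUtility v (t k) (b k)) :
    netUtility v (t k') (b k') ≤ netUtility v (t k) (b k) := by
  rcases (hle k').eq_or_lt with hone | hlt
  · have hunreleased : netUtility v (t k') (b k') ≤ 0 := by
      simpa [netUtility, hone] using hpay k' hone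
    exact hunreleased.trans haccept
  · exact netUtility_le_of_unitPrice_le (htime hk) hlt
      (hprice ((htime hk).trans_lt hlt) hlt hk) haccept

end NetUtility

theorem exists_isLeast_of_nonempty {α : Type*} [LinearOrder α] [WellFoundedLT α] {s : Set α}
    (hs : s.Nonempty) : ∃ a, IsLeast s a := by
  simpa only [minimal_iff_isLeast] using exists_minimal_of_wellFoundedLT (· ∈ s) hs

section Mechanism

/-- The cost share vectors accepted by every agent under the given reports, encoded as a set of
positions in the sequence: the mechanism implements its least element, if there is one. -/
def unanimousOffers {ι N K : Type*} [Ring K] [LE K] (T B : ι → N → K) (report : N → K) :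
    Set ι :=
  {j | ∀ i, 0 ≤ netUtility (report i) (T j i) (B j i)}

theorem mem_unanimousOffers_of_update {ι N K : Type*} [DecidableEq N] [Ring K] [LE K]
    {T B : ι → N → K} {v : N → K} {i : N} {v' : K} {j : ι}
    (hj : j ∈ unanimousOffers T B (Function.update v i v'))
    (hi : 0 ≤ netUtility (v i) (T j i) (B j i)) :
    j ∈ unanimousOffers T B v := by
  intro i'
  rcases eq_or_ne i' i with rfl | hne
  · exact hi
  · simpa only [Function.update_of_ne hne] using hj i'

variable {n m : ℕ} {T B : Fin m → Fin n → ℝ} {report : Fin n → ℝ}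

theorem seqUtil_of_isLeast {k : Fin m} (hk : IsLeast (unanimousOffers T B report) k)
    (v : ℝ) (i : Fin n) : seqUtil T B report v i = netUtility v (T k i) (B k i) := by
  unfold seqUtil
  extract_lets S
  have hS : (S : Set (Fin m)) = unanimousOffers T B report := by
    ext j
    simp [S, unanimousOffers, netUtility]
  have hne : S.Nonempty := Finset.coe_nonempty.mp (hS ▸ hk.nonempty)
  have hmin : S.min' hne = k := (S.isLeast_min' hne).unique (hS ▸ hk)
  rw [dif_pos hne, hmin, netUtility]

theorem seqUtil_of_unanimousOffers_eq_empty (h : unanimousOffers T B report = ∅)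
    (v : ℝ) (i : Fin n) : seqUtil T B report v i = 0 := by
  refine dif_neg fun ⟨j, hj⟩ => ?_
  have hmem : j ∈ unanimousOffers T B report := (Finset.mem_filter.mp hj).2
  exact (h ▸ hmem : j ∈ (∅ : Set (Fin m)))

theorem seqUtil_truthful_nonneg (T B : Fin m → Fin n → ℝ) (v : Fin n → ℝ) (i : Fin n) :
    0 ≤ seqUtil T B v (v i) i := by
  rcases (unanimousOffers T B v).eq_empty_or_nonempty with hempty | hne
  · exact (seqUtil_of_unanimousOffers_eq_empty hempty (v i) i).ge
  · obtain ⟨k, hk⟩ := exists_isLeast_of_nonempty hne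
    exact (hk.1 i).trans_eq (seqUtil_of_isLeast hk (v i) i).symm

theorem seqUtil_update_le_of_netUtility_le {i : Fin n} {v : Fin n → ℝ}
    (hlater : ∀ ⦃k k' : Fin m⦄, k ≤ k' → 0 ≤ netUtility (v i) (T k i) (B k i) →
      netUtility (v i) (T k' i) (B k' i) ≤ netUtility (v i) (T k i) (B k i)) (v' : ℝ) :
    seqUtil T B (Function.update v i v') (v i) i ≤ seqUtil T B v (v i) i := by
  have htruthful := seqUtil_truthful_nonneg T B v i
  rcases (unanimousOffers T B (Function.update v i v')).eq_empty_or_nonempty with hempty | hne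
  · rwa [seqUtil_of_unanimousOffers_eq_empty hempty]
  obtain ⟨k', hk'⟩ := exists_isLeast_of_nonempty hne
  rw [seqUtil_of_isLeast hk']
  rcases lt_or_ge (netUtility (v i) (T k' i) (B k' i)) 0 with hloss | hgain
  · exact hloss.le.trans htruthful
  have hmem : k' ∈ unanimousOffers T B v := mem_unanimousOffers_of_update hk'.1 hgain
  obtain ⟨k, hk⟩ := exists_isLeast_of_nonempty ⟨k', hmem⟩
  rw [seqUtil_of_isLeast hk]
  exact hlater (hk.2 hmem) (hk.1 i)

end Mechanism

-- At release time `1` the unit price should be read as infinite, but `B j i / 0 = 0` in Lean;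
-- restricting monotonicity to `T j i < 1` avoids that junk value.
theorem stmt11_general {n m : ℕ} (T B : Fin m → Fin n → ℝ) (i : Fin n)
    (hT : ∀ j, T j i ≤ 1) (hB : ∀ j, T j i = 1 → 0 ≤ B j i)
    (hprice : MonotoneOn (fun j => B j i / (1 - T j i)) {j | T j i < 1})
    (htime : Monotone fun j => T j i) (v : Fin n → ℝ) (v' : ℝ) :
    seqUtil T B (Function.update v i v') (v i) i ≤ seqUtil T B v (v i) i :=
  seqUtil_update_le_of_netUtility_le
    (fun _ _ => netUtility_le_of_monotoneOn_unitPrice hT hB hprice htime) _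

/-- If for every agent the unit price `Bᵢ/(1-Tᵢ)` and the release
time `Tᵢ` are nondecreasing along the sequence of cost share vectors, then the
sequential unanimous mechanism is strategy-proof. -/
theorem stmt11 {n m : ℕ} (T B : Fin m → Fin n → ℝ)
    (hT : ∀ j i, T j i ∈ Set.Icc (0:ℝ) 1)
    (hB : ∀ j i, 0 ≤ B j i)
    (hBsum : ∀ j, ∑ i, B j i = 1)
    (hprice : ∀ i : Fin n, Monotone fun j => B j i / (1 - T j i))
    (htime : ∀ i : Fin n, Monotone fun j => T j i) :
    ∀ (i : Fin n) (v : Fin n → ℝ) (v' : ℝ),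
      seqUtil T B (Function.update v i v') (v i) i ≤ seqUtil T B v (v i) i :=
  fun i => stmt11_general T B i (fun j => (hT j i).2) (fun j _ => hB j i)
    ((hprice i).monotoneOn _) (htime i)
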